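/- arXiv:1411.5663 — 2 statements merged into one kernel-verified Lean document; each statement's English description precedes it below -/
import Mathlib

section
/- (Intrinsic torsion formula, pointwise form of Proposition 3.3.) Let φ ∈ Δ be a unit spinor, S ∈ End(ℝ^6) and η a linear functional on ℝ^6. Then for every x ∈ ℝ^6: S(x)·φ + η(x)·j(φ) = (1/2)·((S(x))⌟ψ_φ)·φ − (1/3)·η(x)·(ω_φ·φ), where (S(x))⌟ψ_φ is the bilinear form (y,z) ↦ ψ_φ(S(x),y,z). In other words, the spinorial field equation ∇φ = η⊗j(φ) + S·φ is realised by Clifford action of the 1-form with values in su(3)^⊥ given by S⌟ψ_φ − (2/3)η⊗ω_φ, acting with the factor 1/2. -/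
open RealInnerProductSpace

noncomputable section

/-- The spin representation space Δ = ℝ^8. -/
abbrev Δ : Type := EuclideanSpace ℝ (Fin 8)

/-- The standard skew endomorphism E_{ij} of ℝ^8: u_i ↦ u_j, u_j ↦ -u_i, others ↦ 0. -/
def E (i j : Fin 8) : Δ →ₗ[ℝ] Δ where
  toFun v := v i • EuclideanSpace.single j (1 : ℝ) - v j • EuclideanSpace.single i (1 : ℝ)
  map_add' x y := by
    simp only [PiLp.add_apply, add_smul]
    module
  map_smul' c x := by
    simp only [PiLp.smul_apply, smul_eq_mul, RingHom.id_apply, mul_smul]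
    module

/-- The seven Clifford endomorphisms e_1, …, e_7 (indexed 0,…,6). -/
def cliff : Fin 7 → (Δ →ₗ[ℝ] Δ) :=
  ![  E 0 7 + E 1 6 - E 2 5 - E 3 4,
    - E 0 6 + E 1 7 + E 2 4 - E 3 5,
    - E 0 5 + E 1 4 - E 2 7 + E 3 6,
    - E 0 4 - E 1 5 - E 2 6 - E 3 7,
    - E 0 2 - E 1 3 + E 4 6 + E 5 7,
      E 0 3 - E 1 2 - E 4 7 + E 5 6,
      E 0 1 - E 2 3 - E 4 5 + E 6 7]

/-- j = e_1 ∘ e_2 ∘ e_3 ∘ e_4 ∘ e_5 ∘ e_6. -/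
def jmap : Δ →ₗ[ℝ] Δ :=
  cliff 0 ∘ₗ cliff 1 ∘ₗ cliff 2 ∘ₗ cliff 3 ∘ₗ cliff 4 ∘ₗ cliff 5

/-- Clifford multiplication of a vector x ∈ ℝ^6 on a spinor. -/
def cm6 (x : EuclideanSpace ℝ (Fin 6)) (φ : Δ) : Δ :=
  ∑ i : Fin 6, x i • cliff i.castSucc φ

/-- Clifford multiplication of a vector x ∈ ℝ^7 on a spinor. -/
def cm7 (x : EuclideanSpace ℝ (Fin 7)) (φ : Δ) : Δ :=
  ∑ i : Fin 7, x i • cliff i φ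


/-- Standard basis vector of ℝ^6. -/
def v6 (i : Fin 6) : EuclideanSpace ℝ (Fin 6) := EuclideanSpace.single i (1 : ℝ)

/-- The 3-form ψ_φ(x,y,z) = -⟨x·y·z·φ, φ⟩ on ℝ^6. -/
def psiP (φ : Δ) (x y z : EuclideanSpace ℝ (Fin 6)) : ℝ :=
  -⟪cm6 x (cm6 y (cm6 z φ)), φ⟫

/-- The 3-form ψ_φ⁻(x,y,z) = -⟨x·y·z·φ, j(φ)⟩ on ℝ^6. -/
def psiM (φ : Δ) (x y z : EuclideanSpace ℝ (Fin 6)) : ℝ :=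
  -⟪cm6 x (cm6 y (cm6 z φ)), jmap φ⟫

/-- Action of a trilinear form on ℝ^6 on a spinor:
τ·χ := Σ_{i<j<k} τ(v_i,v_j,v_k) e_i(e_j(e_k(χ))). -/
def tact6 (τ : EuclideanSpace ℝ (Fin 6) → EuclideanSpace ℝ (Fin 6) →
    EuclideanSpace ℝ (Fin 6) → ℝ) (χ : Δ) : Δ :=
  ∑ i : Fin 6, ∑ j : Fin 6, ∑ k : Fin 6,
    if i < j ∧ j < k then
      τ (v6 i) (v6 j) (v6 k) • cliff i.castSucc (cliff j.castSucc (cliff k.castSucc χ))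
    else 0

/-- Action of a bilinear form on ℝ^6 on a spinor:
σ·χ := Σ_{i<j} σ(v_i,v_j) e_i(e_j(χ)). -/
def bact6 (σ : EuclideanSpace ℝ (Fin 6) → EuclideanSpace ℝ (Fin 6) → ℝ) (χ : Δ) : Δ :=
  ∑ i : Fin 6, ∑ j : Fin 6,
    if i < j then σ (v6 i) (v6 j) • cliff i.castSucc (cliff j.castSucc χ) else 0

theorem cliff_eq_0 (v : Δ) : cliff 0 v = !₂[-v 7, -v 6, v 5, v 4, -v 3, -v 2, v 1, v 0] := by
  ext k; fin_cases k <;> simp [cliff, E]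

theorem cliff_eq_1 (v : Δ) : cliff 1 v = !₂[v 6, -v 7, -v 4, v 5, v 2, -v 3, -v 0, v 1] := by
  ext k; fin_cases k <;> simp [cliff, E]

theorem cliff_eq_2 (v : Δ) : cliff 2 v = !₂[v 5, -v 4, v 7, -v 6, v 1, -v 0, v 3, -v 2] := by
  ext k; fin_cases k <;> simp [cliff, E]

theorem cliff_eq_3 (v : Δ) : cliff 3 v = !₂[v 4, v 5, v 6, v 7, -v 0, -v 1, -v 2, -v 3] := by
  ext k; fin_cases k <;> simp [cliff, E]

theorem cliff_eq_4 (v : Δ) : cliff 4 v = !₂[v 2, v 3, -v 0, -v 1, -v 6, -v 7, v 4, v 5] := by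
  ext k; fin_cases k <;> simp [cliff, E]

theorem cliff_eq_5 (v : Δ) : cliff 5 v = !₂[-v 3, v 2, -v 1, v 0, v 7, -v 6, v 5, -v 4] := by
  ext k; fin_cases k <;> simp [cliff, E]

theorem jmap_eq (v : Δ) : jmap v = !₂[v 1, -v 0, -v 3, v 2, -v 5, v 4, v 7, -v 6] := by
  ext k
  simp only [jmap, LinearMap.comp_apply, cliff_eq_0, cliff_eq_1, cliff_eq_2, cliff_eq_3,
    cliff_eq_4, cliff_eq_5]
  fin_cases k <;> simp

theorem cm6_v6 (i : Fin 6) (v : Δ) : cm6 (v6 i) v = cliff i.castSucc v := by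
  simp [cm6, v6, PiLp.single_apply]

theorem inner_eq8 (v w : Δ) : ⟪v, w⟫ = v 0 * w 0 + v 1 * w 1 + v 2 * w 2 + v 3 * w 3
    + v 4 * w 4 + v 5 * w 5 + v 6 * w 6 + v 7 * w 7 := by
  simp only [PiLp.inner_apply, Fin.sum_univ_eight, RCLike.inner_apply, conj_trivial]
  ring

theorem cm6_eq (x : EuclideanSpace ℝ (Fin 6)) (v : Δ) : cm6 x v =
    x 0 • cliff 0 v + x 1 • cliff 1 v + x 2 • cliff 2 v + x 3 • cliff 3 v
      + x 4 • cliff 4 v + x 5 • cliff 5 v := by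
  simp only [cm6, Fin.sum_univ_six]
  rfl

theorem bact6_eq (σ : EuclideanSpace ℝ (Fin 6) → EuclideanSpace ℝ (Fin 6) → ℝ) (v : Δ) :
    bact6 σ v =
      σ (v6 0) (v6 1) • cliff 0 (cliff 1 v)
      + σ (v6 0) (v6 2) • cliff 0 (cliff 2 v)
      + σ (v6 0) (v6 3) • cliff 0 (cliff 3 v)
      + σ (v6 0) (v6 4) • cliff 0 (cliff 4 v)
      + σ (v6 0) (v6 5) • cliff 0 (cliff 5 v)
      + σ (v6 1) (v6 2) • cliff 1 (cliff 2 v)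
      + σ (v6 1) (v6 3) • cliff 1 (cliff 3 v)
      + σ (v6 1) (v6 4) • cliff 1 (cliff 4 v)
      + σ (v6 1) (v6 5) • cliff 1 (cliff 5 v)
      + σ (v6 2) (v6 3) • cliff 2 (cliff 3 v)
      + σ (v6 2) (v6 4) • cliff 2 (cliff 4 v)
      + σ (v6 2) (v6 5) • cliff 2 (cliff 5 v)
      + σ (v6 3) (v6 4) • cliff 3 (cliff 4 v)
      + σ (v6 3) (v6 5) • cliff 3 (cliff 5 v)
      + σ (v6 4) (v6 5) • cliff 4 (cliff 5 v) := by
  simp only [bact6, Fin.sum_univ_six]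
  simp [← add_assoc]

/-- The quadratic form built from all products `e_i e_j φ`, contracted with an arbitrary spinor. -/
theorem gram_act (φ χ : Δ) :
    bact6 (fun y z => ⟪cm6 y (cm6 z φ), χ⟫) φ
      = (2 * ⟪φ, φ⟫) • χ - (2 * ⟪φ, χ⟫) • φ + ⟪jmap φ, χ⟫ • jmap φ := by
  simp only [bact6_eq, cm6_v6]
  simp only [Fin.castSucc_zero, show (Fin.castSucc (1 : Fin 6)) = 1 from rfl,
    show (Fin.castSucc (2 : Fin 6)) = 2 from rfl, show (Fin.castSucc (3 : Fin 6)) = 3 from rfl,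
    show (Fin.castSucc (4 : Fin 6)) = 4 from rfl, show (Fin.castSucc (5 : Fin 6)) = 5 from rfl,
    jmap_eq, cliff_eq_0, cliff_eq_1, cliff_eq_2, cliff_eq_3, cliff_eq_4, cliff_eq_5, inner_eq8]
  ext k
  fin_cases k <;> simp <;> ring

theorem cm6_skew (a : EuclideanSpace ℝ (Fin 6)) (v w : Δ) : ⟪cm6 a v, w⟫ = -⟪v, cm6 a w⟫ := by
  rw [inner_eq8, inner_eq8]
  simp [cm6_eq, cliff_eq_0, cliff_eq_1, cliff_eq_2, cliff_eq_3, cliff_eq_4, cliff_eq_5]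
  ring

theorem cm6_jmap (a : EuclideanSpace ℝ (Fin 6)) (v : Δ) :
    cm6 a (jmap v) = -jmap (cm6 a v) := by
  ext k
  simp only [cm6_eq, jmap_eq, cliff_eq_0, cliff_eq_1, cliff_eq_2, cliff_eq_3, cliff_eq_4,
    cliff_eq_5]
  fin_cases k <;> simp <;> ring

theorem jmap_skew (v w : Δ) : ⟪jmap v, w⟫ = -⟪v, jmap w⟫ := by
  rw [inner_eq8, inner_eq8]
  simp [jmap_eq]
  ring

theorem jmap_jmap (v : Δ) : jmap (jmap v) = -v := by
  ext k
  fin_cases k <;> simp [jmap_eq]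

theorem psi_act (a : EuclideanSpace ℝ (Fin 6)) (φ : Δ) :
    bact6 (fun y z => psiP φ a y z) φ = (2 * ⟪φ, φ⟫) • cm6 a φ := by
  have h : ∀ y z, psiP φ a y z = ⟪cm6 y (cm6 z φ), cm6 a φ⟫ := by
    intro y z
    rw [psiP, cm6_skew, neg_neg]
  have h0 : ⟪φ, cm6 a φ⟫ = 0 := by
    have := cm6_skew a φ φ
    rw [real_inner_comm] at this
    linarith
  have h1 : ⟪jmap φ, cm6 a φ⟫ = 0 := by
    have e1 := cm6_skew a φ (jmap φ)
    rw [cm6_jmap, inner_neg_right, neg_neg, real_inner_comm] at e1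
    have e2 := jmap_skew φ (cm6 a φ)
    linarith
  simp only [h]
  rw [gram_act, h0, h1]
  simp

theorem inner_cliff (i : Fin 6) (y : EuclideanSpace ℝ (Fin 6)) (φ : Δ) :
    ⟪cliff i.castSucc φ, cm6 y φ⟫ = y i * ⟪φ, φ⟫ := by
  rw [inner_eq8, inner_eq8 φ φ]
  fin_cases i <;>
  simp [cm6_eq, cliff_eq_0, cliff_eq_1, cliff_eq_2, cliff_eq_3, cliff_eq_4, cliff_eq_5
    ] <;> ring

theorem omega_act (φ : Δ) :
    bact6 (fun y z => ⟪cm6 y φ, jmap (cm6 z φ)⟫) φ = (-3 * ⟪φ, φ⟫) • jmap φ := by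
  have h : ∀ y z, ⟪cm6 y φ, jmap (cm6 z φ)⟫ = ⟪cm6 y (cm6 z φ), -jmap φ⟫ := by
    intro y z
    rw [cm6_skew, cm6_jmap, inner_neg_right, inner_neg_right, neg_neg, real_inner_comm, jmap_skew]
  have h0 : ⟪φ, jmap φ⟫ = 0 := by
    have := jmap_skew φ φ
    rw [real_inner_comm] at this
    linarith
  have h1 : ⟪jmap φ, jmap φ⟫ = ⟪φ, φ⟫ := by
    rw [jmap_skew, jmap_jmap, inner_neg_right, neg_neg]
  simp only [h]
  rw [gram_act, inner_neg_right, inner_neg_right, h0, h1]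
  module

/-- Intrinsic torsion formula (pointwise form of Proposition 3.3):
S(x)·φ + η(x)·j(φ) = (1/2)((S x)⌟ψ_φ)·φ - (1/3)η(x)(ω_φ·φ),
where ω_φ(x,y) = ⟨x, J_φ y⟩ and J_φ is the unique linear map with
j(x·φ) = (J_φ x)·φ. -/
theorem intrinsic_torsion_formula (φ : Δ) (hφ : ⟪φ, φ⟫ = 1)
    (J : EuclideanSpace ℝ (Fin 6) →ₗ[ℝ] EuclideanSpace ℝ (Fin 6))
    (hJ : ∀ x : EuclideanSpace ℝ (Fin 6), jmap (cm6 x φ) = cm6 (J x) φ)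
    (S : EuclideanSpace ℝ (Fin 6) →ₗ[ℝ] EuclideanSpace ℝ (Fin 6))
    (η : EuclideanSpace ℝ (Fin 6) →ₗ[ℝ] ℝ) :
    ∀ x : EuclideanSpace ℝ (Fin 6),
      cm6 (S x) φ + η x • jmap φ =
        (1 / 2 : ℝ) • bact6 (fun y z => psiP φ (S x) y z) φ -
          ((1 / 3 : ℝ) * η x) • bact6 (fun y z => ⟪y, J z⟫) φ := by
  intro x
  have h2 : bact6 (fun y z => ⟪y, J z⟫) φ
      = bact6 (fun y z => ⟪cm6 y φ, jmap (cm6 z φ)⟫) φ := by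
    have key : ∀ i j : Fin 6, ⟪v6 i, J (v6 j)⟫ = ⟪cm6 (v6 i) φ, jmap (cm6 (v6 j) φ)⟫ := by
      intro i j
      rw [hJ, cm6_v6 i, inner_cliff, hφ, mul_one]
      simp [v6, EuclideanSpace.inner_single_left]
    simp only [bact6, key]
  rw [h2, omega_act, psi_act, hφ]
  module

end
end

section
/- (Pointwise form of the W_4 row of the G2 classification theorem.) Let φ ∈ Δ be a unit spinor and u ∈ ℝ^7, and let S_u ∈ End(ℝ^7) be defined by ⟨S_u(x), y⟩ = Φ_φ(u, x, y) for all x, y ∈ ℝ^7 (so S_u = u⌟Φ_φ, equivalently S_u(x) = u×x). Then for every x ∈ ℝ^7: S_u(x)·φ = x·u·φ + ⟨u, x⟩·φ. -/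
open RealInnerProductSpace

noncomputable section

/-- Standard basis vector of ℝ^7. -/
def v7 (i : Fin 7) : EuclideanSpace ℝ (Fin 7) := EuclideanSpace.single i (1 : ℝ)

/-- The G₂ 3-form Φ_φ(x,y,z) = ⟨x·y·z·φ, φ⟩ on ℝ^7. -/
def PhiP (φ : Δ) (x y z : EuclideanSpace ℝ (Fin 7)) : ℝ :=
  ⟪cm7 x (cm7 y (cm7 z φ)), φ⟫

/-- Action of a trilinear form on ℝ^7 on a spinor:
τ·χ := Σ_{i<j<k} τ(v_i,v_j,v_k) e_i(e_j(e_k(χ))). -/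
def tact7 (τ : EuclideanSpace ℝ (Fin 7) → EuclideanSpace ℝ (Fin 7) →
    EuclideanSpace ℝ (Fin 7) → ℝ) (χ : Δ) : Δ :=
  ∑ i : Fin 7, ∑ j : Fin 7, ∑ k : Fin 7,
    if i < j ∧ j < k then
      τ (v7 i) (v7 j) (v7 k) • cliff i (cliff j (cliff k χ))
    else 0

/-- Action of a bilinear form on ℝ^7 on a spinor:
σ·χ := Σ_{i<j} σ(v_i,v_j) e_i(e_j(χ)). -/
def bact7 (σ : EuclideanSpace ℝ (Fin 7) → EuclideanSpace ℝ (Fin 7) → ℝ) (χ : Δ) : Δ :=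
  ∑ i : Fin 7, ∑ j : Fin 7,
    if i < j then σ (v7 i) (v7 j) • cliff i (cliff j χ) else 0

lemma cm7_coord (x : EuclideanSpace ℝ (Fin 7)) (p : Δ) :
    cm7 x p 0 = -x 0 * p 7 + x 1 * p 6 + x 2 * p 5 + x 3 * p 4 + x 4 * p 2 - x 5 * p 3 - x 6 * p 1 ∧
    cm7 x p 1 = -x 0 * p 6 - x 1 * p 7 - x 2 * p 4 + x 3 * p 5 + x 4 * p 3 + x 5 * p 2 + x 6 * p 0 ∧
    cm7 x p 2 = x 0 * p 5 - x 1 * p 4 + x 2 * p 7 + x 3 * p 6 - x 4 * p 0 - x 5 * p 1 + x 6 * p 3 ∧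
    cm7 x p 3 = x 0 * p 4 + x 1 * p 5 - x 2 * p 6 + x 3 * p 7 - x 4 * p 1 + x 5 * p 0 - x 6 * p 2 ∧
    cm7 x p 4 = -x 0 * p 3 + x 1 * p 2 + x 2 * p 1 - x 3 * p 0 - x 4 * p 6 + x 5 * p 7 + x 6 * p 5 ∧
    cm7 x p 5 = -x 0 * p 2 - x 1 * p 3 - x 2 * p 0 - x 3 * p 1 - x 4 * p 7 - x 5 * p 6 - x 6 * p 4 ∧
    cm7 x p 6 = x 0 * p 1 - x 1 * p 0 + x 2 * p 3 - x 3 * p 2 + x 4 * p 4 + x 5 * p 5 - x 6 * p 7 ∧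
    cm7 x p 7 = x 0 * p 0 + x 1 * p 1 - x 2 * p 2 - x 3 * p 3 + x 4 * p 5 - x 5 * p 4 + x 6 * p 6 := by
  refine ⟨?_, ?_, ?_, ?_, ?_, ?_, ?_, ?_⟩ <;>
  · simp [cm7, cliff, E, Fin.sum_univ_succ, Fin.succ]
    ring

lemma inner8 (a b : Δ) : ⟪a, b⟫ = a 0 * b 0 + a 1 * b 1 + a 2 * b 2 + a 3 * b 3 + a 4 * b 4
    + a 5 * b 5 + a 6 * b 6 + a 7 * b 7 := by
  simp [PiLp.inner_apply, Fin.sum_univ_eight]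
  ring

lemma inner7 (a b : EuclideanSpace ℝ (Fin 7)) : ⟪a, b⟫ = a 0 * b 0 + a 1 * b 1 + a 2 * b 2
    + a 3 * b 3 + a 4 * b 4 + a 5 * b 5 + a 6 * b 6 := by
  simp [PiLp.inner_apply, Fin.sum_univ_seven]
  ring

lemma cm7_skew (x : EuclideanSpace ℝ (Fin 7)) (a b : Δ) :
    ⟪cm7 x a, b⟫ = -⟪a, cm7 x b⟫ := by
  obtain ⟨h0, h1, h2, h3, h4, h5, h6, h7⟩ := cm7_coord x a
  obtain ⟨k0, k1, k2, k3, k4, k5, k6, k7⟩ := cm7_coord x b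
  rw [inner8, inner8, h0, h1, h2, h3, h4, h5, h6, h7, k0, k1, k2, k3, k4, k5, k6, k7]
  ring

lemma cm7_inner (x y : EuclideanSpace ℝ (Fin 7)) (a : Δ) :
    ⟪cm7 x a, cm7 y a⟫ = ⟪x, y⟫ * ⟪a, a⟫ := by
  obtain ⟨h0, h1, h2, h3, h4, h5, h6, h7⟩ := cm7_coord x a
  obtain ⟨k0, k1, k2, k3, k4, k5, k6, k7⟩ := cm7_coord y a
  rw [inner8, inner8, inner7, h0, h1, h2, h3, h4, h5, h6, h7, k0, k1, k2, k3, k4, k5, k6, k7]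
  ring

/-- Every spinor orthogonal to a unit spinor is a Clifford multiple of it. -/
lemma cm7_surj (p w : Δ) (hp : ⟪p, p⟫ = 1) (h : ⟪w, p⟫ = 0) :
    ∃ y, cm7 y p = w := by
  refine ⟨WithLp.toLp 2 (fun i => ⟪w, cm7 (v7 i) p⟫), ?_⟩
  set y : EuclideanSpace ℝ (Fin 7) := WithLp.toLp 2 (fun i => ⟪w, cm7 (v7 i) p⟫) with hy
  have hyi : ∀ i, y i = ⟪w, cm7 (v7 i) p⟫ := fun i => rfl
  have e : ∀ i, y i = w 0 * cm7 (v7 i) p 0 + w 1 * cm7 (v7 i) p 1 + w 2 * cm7 (v7 i) p 2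
      + w 3 * cm7 (v7 i) p 3 + w 4 * cm7 (v7 i) p 4 + w 5 * cm7 (v7 i) p 5
      + w 6 * cm7 (v7 i) p 6 + w 7 * cm7 (v7 i) p 7 := fun i => by rw [hyi, inner8]
  have c : ∀ i, _ := fun i => cm7_coord (v7 i) p
  have f : ∀ i, y i = _ := fun i => by
    rw [e, (c i).1, (c i).2.1, (c i).2.2.1, (c i).2.2.2.1, (c i).2.2.2.2.1, (c i).2.2.2.2.2.1,
      (c i).2.2.2.2.2.2.1, (c i).2.2.2.2.2.2.2]
  have f0 := f 0
  have f1 := f 1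
  have f2 := f 2
  have f3 := f 3
  have f4 := f 4
  have f5 := f 5
  have f6 := f 6
  simp [v7] at f0 f1 f2 f3 f4 f5 f6
  clear_value y
  clear f e c hyi hy
  rw [inner8] at hp h
  obtain ⟨h0, h1, h2, h3, h4, h5, h6, h7⟩ := cm7_coord y p
  ext i
  fin_cases i <;> simp only [Fin.reduceFinMk, Fin.zero_eta, Fin.mk_one, Fin.isValue]
  · rw [h0, f0, f1, f2, f3, f4, f5, f6]; linear_combination w 0 * hp - p 0 * h
  · rw [h1, f0, f1, f2, f3, f4, f5, f6]; linear_combination w 1 * hp - p 1 * h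
  · rw [h2, f0, f1, f2, f3, f4, f5, f6]; linear_combination w 2 * hp - p 2 * h
  · rw [h3, f0, f1, f2, f3, f4, f5, f6]; linear_combination w 3 * hp - p 3 * h
  · rw [h4, f0, f1, f2, f3, f4, f5, f6]; linear_combination w 4 * hp - p 4 * h
  · rw [h5, f0, f1, f2, f3, f4, f5, f6]; linear_combination w 5 * hp - p 5 * h
  · rw [h6, f0, f1, f2, f3, f4, f5, f6]; linear_combination w 6 * hp - p 6 * h
  · rw [h7, f0, f1, f2, f3, f4, f5, f6]; linear_combination w 7 * hp - p 7 * h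

/-- Pointwise form of the W₄ row of the G₂ classification theorem: for u ∈ ℝ^7,
the endomorphism S_u = u⌟Φ_φ (i.e. S_u(x) = u×x, characterised by
⟨S_u(x), y⟩ = Φ_φ(u,x,y)) satisfies S_u(x)·φ = x·u·φ + ⟨u,x⟩·φ for every x. -/
theorem W4_row (φ : Δ) (hφ : ⟪φ, φ⟫ = 1) (u : EuclideanSpace ℝ (Fin 7))
    (Su : EuclideanSpace ℝ (Fin 7) →ₗ[ℝ] EuclideanSpace ℝ (Fin 7))
    (hSu : ∀ x y : EuclideanSpace ℝ (Fin 7), ⟪Su x, y⟫ = PhiP φ u x y) :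
    ∀ x : EuclideanSpace ℝ (Fin 7),
      cm7 (Su x) φ = cm7 x (cm7 u φ) + ⟪u, x⟫ • φ := by
  intro x
  have hz : ∀ z : EuclideanSpace ℝ (Fin 7), ⟪cm7 z φ, φ⟫ = 0 := fun z => by
    have h1 := cm7_skew z φ φ
    rw [real_inner_comm (cm7 z φ) φ] at h1
    have h2 := real_inner_comm (cm7 z φ) φ
    linarith
  have key : ⟪cm7 x (cm7 u φ) + ⟪u, x⟫ • φ, φ⟫ = 0 := by
    rw [inner_add_left, real_inner_smul_left, hφ, cm7_skew, cm7_inner, hφ]; ring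
  obtain ⟨y, hy⟩ := cm7_surj φ _ hφ key
  rw [← hy]
  congr 1
  refine ext_inner_right ℝ fun z => ?_
  have h1 : ⟪cm7 y φ, cm7 z φ⟫ = ⟪y, z⟫ := by rw [cm7_inner, hφ, mul_one]
  rw [← h1, hy, hSu, PhiP, inner_add_left, real_inner_smul_left,
    real_inner_comm (cm7 z φ) φ, hz, cm7_skew, cm7_skew x (cm7 z φ), cm7_skew x (cm7 u φ)]
  have h2 := cm7_skew x (cm7 z φ) (cm7 u φ)
  have h3 := cm7_skew x (cm7 u φ) (cm7 z φ)
  have h4 := real_inner_comm (cm7 x (cm7 z φ)) (cm7 u φ)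
  have h5 := real_inner_comm (cm7 x (cm7 u φ)) (cm7 z φ)
  linarith

end
end
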